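/- Let S be a symmetric positive definite real n×n matrix, let E₁, …, E_N be real n×nᵢ matrices and E_Π a real n×p matrix such that the n×n matrix obtained by concatenating the columns of E₁, …, E_N, E_Π is invertible, and assume Eᵢᵀ S Eⱼ = 0 for all i ≠ j. Define S_Δ⁻ := Σ_{i=1}^{N} Eᵢ (Eᵢᵀ S Eᵢ)⁻¹ Eᵢᵀ and F := E_Πᵀ S E_Π − E_Πᵀ S S_Δ⁻ S E_Π, and assume F is invertible. Then S⁻¹ = S_Δ⁻ + S_Δ⁻ S E_Π F⁻¹ E_Πᵀ S S_Δ⁻ − S_Δ⁻ S E_Π F⁻¹ E_Πᵀ − E_Π F⁻¹ E_Πᵀ S S_Δ⁻ + E_Π F⁻¹ E_Πᵀ. -/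

import Mathlib

open Matrix Finset

/-!
Write `X` for the claimed inverse. It factors as
`X = D + (P - D S P) F⁻¹ (Q - Q S D)` with `D = S_Δ⁻`, `P = E_Π`, `Q = E_Πᵀ` and
`F = (Q - Q S D) S P`. Orthogonality gives `D S Eⱼ = Eⱼ`, so `(Q - Q S D) S Eⱼ = 0` and
`X S Eⱼ = Eⱼ`; the choice of `F` gives `X S P = D S P + (P - D S P) = P`. Thus `X S` fixes every
column of `E₁, …, E_N, E_Π`, and these span the whole space. Nothing changes when the transposes on
the left are replaced by arbitrary matrices.
-/

section Columns

variable {R l n p q ι : Type*} {m : ι → Type*}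

/-- The matrix whose columns are those of all the `E i`, side by side. -/
def sigmaCols (E : ∀ i, Matrix n (m i) R) : Matrix n (Σ i, m i) R :=
  Matrix.of fun r s => E s.1 r s.2

theorem mul_sigmaCols [NonUnitalNonAssocSemiring R] [Fintype n] (A : Matrix l n R)
    (E : ∀ i, Matrix n (m i) R) : A * sigmaCols E = sigmaCols fun i => A * E i :=
  rfl

theorem mulVec_injective_of_fromCols_sigmaCols [CommSemiring R] [∀ i, Fintype (m i)]
    [Fintype (Σ i, m i)] [Fintype p] {E : ∀ i, Matrix n (m i) R} {P : Matrix n p R}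
    (hinj : Function.Injective (fromCols (sigmaCols E) P).mulVec) (i : ι) :
    Function.Injective (E i).mulVec := by
  rw [mulVec_injective_iff] at hinj ⊢
  exact hinj.comp (fun k => Sum.inl ⟨i, k⟩) (Sum.inl_injective.comp sigma_mk_injective)

theorem eq_one_of_mul_eq_self_of_mulVec_surjective [Semiring R] [Fintype n] [DecidableEq n]
    [Fintype q] {A : Matrix n n R} {C : Matrix n q R} (hC : Function.Surjective C.mulVec)
    (h : A * C = C) : A = 1 := by
  obtain ⟨B, hCB⟩ := mulVec_surjective_iff_exists_right_inverse.mp hC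
  calc
    A = A * C * B := by rw [Matrix.mul_assoc, hCB, Matrix.mul_one]
    _ = 1 := by rw [h, hCB]

end Columns

section Inverse

variable {R n p q ι : Type*} {m : ι → Type*} [CommRing R] [Fintype n]

/-- The sum of the local solves `E i * (G i * S * E i)⁻¹ * G i`, with trial matrices `E i` and test
matrices `G i`. For `G i = (E i)ᵀ` this is the paper's `S_Δ⁻`. A summand with singular
`G i * S * E i` is zero. -/
noncomputable def sumLocalSolves [Fintype ι] [∀ i, Fintype (m i)] [∀ i, DecidableEq (m i)]
    (S : Matrix n n R) (E : ∀ i, Matrix n (m i) R) (G : ∀ i, Matrix (m i) n R) : Matrix n n R :=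
  ∑ i, E i * (G i * S * E i)⁻¹ * G i

theorem sumLocalSolves_mul_mul_eq_self [Fintype ι] [∀ i, Fintype (m i)] [∀ i, DecidableEq (m i)]
    {S : Matrix n n R} {E : ∀ i, Matrix n (m i) R} {G : ∀ i, Matrix (m i) n R}
    (horth : ∀ i j, i ≠ j → G i * S * E j = 0) {j : ι} (hunit : IsUnit (G j * S * E j)) :
    sumLocalSolves S E G * S * E j = E j := by
  have summand_mul (i : ι) : E i * (G i * S * E i)⁻¹ * G i * S * E j =
      E i * (G i * S * E i)⁻¹ * (G i * S * E j) := by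
    simp only [Matrix.mul_assoc]
  simp only [sumLocalSolves, Matrix.sum_mul, summand_mul]
  rw [Fintype.sum_eq_single j fun i hij => by rw [horth i j hij, Matrix.mul_zero]]
  exact nonsing_inv_mul_cancel_right _ _ ((isUnit_iff_isUnit_det _).mp hunit)

/-- The coarse matrix `F` of the paper, for a coarse trial matrix `P` and test matrix `Q`: the
Schur complement left after eliminating the part of the space on which `D` inverts `S`. -/
def coarseSchur (S D : Matrix n n R) (P : Matrix n p R) (Q : Matrix p n R) : Matrix p p R :=
  Q * S * P - Q * S * D * S * P

variable [Fintype p] [DecidableEq p]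

/-- The partial inverse `D` of `S`, completed by a solve with the coarse matrix
`coarseSchur S D P Q`. -/
noncomputable def coarseCorrection (S D : Matrix n n R) (P : Matrix n p R) (Q : Matrix p n R) :
    Matrix n n R :=
  D + (P - D * S * P) * (coarseSchur S D P Q)⁻¹ * (Q - Q * S * D)

variable {S D : Matrix n n R} {P : Matrix n p R} {Q : Matrix p n R}

theorem coarseCorrection_mul_mul_eq_self_of_mul_mul_eq_self {A : Matrix n q R}
    (hA : D * S * A = A) : coarseCorrection S D P Q * S * A = A := by
  have test_eq_zero : (Q - Q * S * D) * (S * A) = 0 := by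
    rw [Matrix.sub_mul, Matrix.mul_assoc (Q * S), ← Matrix.mul_assoc D, hA, Matrix.mul_assoc,
      sub_self]
  rw [coarseCorrection, Matrix.mul_assoc, Matrix.add_mul, Matrix.mul_assoc _ (Q - _), test_eq_zero,
    Matrix.mul_zero, add_zero, ← Matrix.mul_assoc, hA]

theorem coarseCorrection_mul_mul_coarse (hF : IsUnit (coarseSchur S D P Q)) :
    coarseCorrection S D P Q * S * P = P := by
  have test_eq_coarseSchur : (Q - Q * S * D) * (S * P) = coarseSchur S D P Q := by
    simp only [coarseSchur, Matrix.sub_mul, Matrix.mul_assoc]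
  rw [coarseCorrection, Matrix.mul_assoc, Matrix.add_mul, Matrix.mul_assoc _ (Q - _),
    test_eq_coarseSchur,
    nonsing_inv_mul_cancel_right _ _ ((isUnit_iff_isUnit_det _).mp hF), ← Matrix.mul_assoc,
    add_sub_cancel]

theorem coarseCorrection_eq_expanded : coarseCorrection S D P Q =
    D + D * S * P * (coarseSchur S D P Q)⁻¹ * Q * S * D
      - D * S * P * (coarseSchur S D P Q)⁻¹ * Q
      - P * (coarseSchur S D P Q)⁻¹ * Q * S * D
      + P * (coarseSchur S D P Q)⁻¹ * Q := by
  simp only [coarseCorrection, Matrix.mul_sub, Matrix.sub_mul, Matrix.mul_assoc]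
  abel

theorem inv_eq_coarseCorrection [DecidableEq n] [Fintype (Σ i, m i)] {E : ∀ i, Matrix n (m i) R}
    (hspan : Function.Surjective (fromCols (sigmaCols E) P).mulVec)
    (hD : ∀ i, D * S * E i = E i) (hF : IsUnit (coarseSchur S D P Q)) :
    S⁻¹ = coarseCorrection S D P Q := by
  refine inv_eq_left_inv (eq_one_of_mul_eq_self_of_mulVec_surjective hspan ?_)
  rw [mul_fromCols, mul_sigmaCols, coarseCorrection_mul_mul_coarse hF]
  simp only [coarseCorrection_mul_mul_eq_self_of_mul_mul_eq_self (hD _)]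

theorem inverse_S_formula_general [DecidableEq n] [Fintype ι] [∀ i, Fintype (m i)]
    [∀ i, DecidableEq (m i)] {E : ∀ i, Matrix n (m i) R} {G : ∀ i, Matrix (m i) n R}
    (hspan : Function.Surjective (fromCols (sigmaCols E) P).mulVec)
    (horth : ∀ i j, i ≠ j → G i * S * E j = 0) (hunit : ∀ i, IsUnit (G i * S * E i))
    {F : Matrix p p R} (hD : D = sumLocalSolves S E G) (hF : F = coarseSchur S D P Q)
    (hFunit : IsUnit F) :
    S⁻¹ = D + D * S * P * F⁻¹ * Q * S * D - D * S * P * F⁻¹ * Q - P * F⁻¹ * Q * S * D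
      + P * F⁻¹ * Q := by
  subst hF
  rw [← coarseCorrection_eq_expanded]
  refine inv_eq_coarseCorrection hspan (fun i => ?_) hFunit
  rw [hD, sumLocalSolves_mul_mul_eq_self horth (hunit i)]

end Inverse

theorem isUnit_transpose_mul_mul_same_of_posDef {n m : Type*} [Fintype n] [Fintype m]
    [DecidableEq m] {S : Matrix n n ℝ} (hS : S.PosDef) {A : Matrix n m ℝ}
    (hA : Function.Injective A.mulVec) : IsUnit (Aᵀ * S * A) := by
  rw [← conjTranspose_eq_transpose_of_trivial]
  exact (hS.conjTranspose_mul_mul_same hA).isUnit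

/-- Explicit formula for `S⁻¹` in terms of `S_Δ⁻`, `E_Π` and
`F := E_Πᵀ S E_Π - E_Πᵀ S S_Δ⁻ S E_Π` (assumed invertible), under the
direct-sum decomposition given by the columns of `E₁, …, E_N, E_Π` and the
cross-orthogonality `Eᵢᵀ S Eⱼ = 0` for `i ≠ j`. -/
theorem inverse_S_formula {n N p : ℕ} (S : Matrix (Fin n) (Fin n) ℝ)
    (hS : S.PosDef) (ni : Fin N → ℕ)
    (E : ∀ i : Fin N, Matrix (Fin n) (Fin (ni i)) ℝ)
    (EPi : Matrix (Fin n) (Fin p) ℝ)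
    (C : Matrix (Fin n) ((Σ i : Fin N, Fin (ni i)) ⊕ Fin p) ℝ)
    (hC : C = Matrix.of fun r j =>
      Sum.elim (fun s : Σ i : Fin N, Fin (ni i) => E s.1 r s.2) (fun k => EPi r k) j)
    (hCinv : Function.Bijective C.mulVec)
    (horth : ∀ i j, i ≠ j → (E i)ᵀ * S * E j = 0)
    (SDelta F : _)
    (hSDelta : SDelta = ∑ i, E i * ((E i)ᵀ * S * E i)⁻¹ * (E i)ᵀ)
    (hF : F = EPiᵀ * S * EPi - EPiᵀ * S * SDelta * S * EPi)
    (hFinv : IsUnit F) :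
    S⁻¹ = SDelta + SDelta * S * EPi * F⁻¹ * EPiᵀ * S * SDelta
        - SDelta * S * EPi * F⁻¹ * EPiᵀ
        - EPi * F⁻¹ * EPiᵀ * S * SDelta
        + EPi * F⁻¹ * EPiᵀ := by
  subst hC
  exact inverse_S_formula_general hCinv.2 horth
    (fun i => isUnit_transpose_mul_mul_same_of_posDef hS
      (mulVec_injective_of_fromCols_sigmaCols hCinv.1 i))
    hSDelta hF hFinv
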